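/- arXiv:1812.01413 — 4 statements merged into one kernel-verified Lean document; each statement's English description precedes it below -/
import Mathlib

section
/- Let Ω ⊆ ℝ² be open with coordinates (x,t) and let u, v, w : Ω → ℝ be smooth. Define the 3×3 matrix-valued functions M = [[0,1,0],[u_xx, v_xx, w_xx],[u_xt, v_xt, w_xt]] and N = [[0,0,1],[u_xt, v_xt, w_xt],[u_tt, v_tt, w_tt]]. Then M·N = N·M at every point of Ω if and only if (u,v,w) satisfies the Oriented Associativity system on Ω. (This is the zero-curvature content of the Lax pair ψ_x = λMψ, ψ_t = λNψ, since ∂_t M = ∂_x N holds automatically by equality of mixed partial derivatives.) -/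
/-- Partial derivative with respect to the first coordinate `x` of `ℝ × ℝ`. -/
noncomputable def pdx (f : ℝ × ℝ → ℝ) (p : ℝ × ℝ) : ℝ := fderiv ℝ f p (1, 0)

/-- Partial derivative with respect to the second coordinate `t` of `ℝ × ℝ`. -/
noncomputable def pdt (f : ℝ × ℝ → ℝ) (p : ℝ × ℝ) : ℝ := fderiv ℝ f p (0, 1)

/-- for smooth `u, v, w` on an open set `Ω ⊆ ℝ²`, the Lax matrices
`M = [[0,1,0],[u_xx,v_xx,w_xx],[u_xt,v_xt,w_xt]]` and
`N = [[0,0,1],[u_xt,v_xt,w_xt],[u_tt,v_tt,w_tt]]` commute at every point of `Ω`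
if and only if `(u,v,w)` satisfies the Oriented Associativity system on `Ω`. -/
theorem statement0 (Ω : Set (ℝ × ℝ)) (hΩ : IsOpen Ω)
    (u v w : ℝ × ℝ → ℝ)
    (hu : ContDiffOn ℝ (⊤ : ℕ∞) u Ω) (hv : ContDiffOn ℝ (⊤ : ℕ∞) v Ω) (hw : ContDiffOn ℝ (⊤ : ℕ∞) w Ω)
    (M N : (ℝ × ℝ) → Matrix (Fin 3) (Fin 3) ℝ)
    (hM : ∀ p, M p = !![0, 1, 0;
                        pdx (pdx u) p, pdx (pdx v) p, pdx (pdx w) p;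
                        pdt (pdx u) p, pdt (pdx v) p, pdt (pdx w) p])
    (hN : ∀ p, N p = !![0, 0, 1;
                        pdt (pdx u) p, pdt (pdx v) p, pdt (pdx w) p;
                        pdt (pdt u) p, pdt (pdt v) p, pdt (pdt w) p]) :
    (∀ p ∈ Ω, M p * N p = N p * M p) ↔
    (∀ p ∈ Ω,
      pdx (pdx u) p = pdt (pdx v) p * pdx (pdx w) p - pdx (pdx v) p * pdt (pdx w) p
        + (pdt (pdx w) p) ^ 2 - pdx (pdx w) p * pdt (pdt w) p ∧
      pdt (pdx u) p = pdt (pdt v) p * pdx (pdx w) p - pdt (pdx v) p * pdt (pdx w) p ∧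
      pdt (pdt u) p = (pdt (pdx v) p) ^ 2 - pdx (pdx v) p * pdt (pdt v) p
        + pdt (pdt v) p * pdt (pdx w) p - pdt (pdx v) p * pdt (pdt w) p) := by
  refine forall_congr' fun p => forall_congr' fun _ => ?_
  rw [hM, hN]
  generalize pdx (pdx u) p = a
  generalize pdx (pdx v) p = b
  generalize pdx (pdx w) p = c
  generalize pdt (pdx u) p = d
  generalize pdt (pdx v) p = e
  generalize pdt (pdx w) p = f
  generalize pdt (pdt u) p = g
  generalize pdt (pdt v) p = h
  generalize pdt (pdt w) p = k
  constructor
  · intro H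
    have h1 := congrFun (congrFun H 1) 1
    have h2 := congrFun (congrFun H 1) 2
    have h3 := congrFun (congrFun H 2) 1
    simp [Matrix.mul_apply, Fin.sum_univ_three] at h1 h2 h3
    refine ⟨?_, ?_, ?_⟩ <;> linarith
  · rintro ⟨rfl, rfl, rfl⟩
    ext i j
    fin_cases i <;> fin_cases j <;>
      simp [Matrix.mul_apply, Fin.sum_univ_three] <;> ring
end

section
/- Let Ω ⊆ ℝ² be open and let u, v, w : Ω → ℝ be smooth functions satisfying the Oriented Associativity system on Ω, with w_xx nowhere zero on Ω. Then the six functions q¹ = u_xx, q² = u_xt, q³ = v_xx, q⁴ = v_xt, q⁵ = w_xx, q⁶ = w_xt satisfy the hydrodynamic-type system of conservation laws: q¹_t = q²_x; q²_t = ∂_x[(q²q⁶ + q¹q⁴ − q²q³)/q⁵]; q³_t = q⁴_x; q⁴_t = ∂_x[(q² + q⁴q⁶)/q⁵]; q⁵_t = q⁶_x; q⁶_t = ∂_x[((q⁶)² − q³q⁶ + q⁴q⁵ − q¹)/q⁵]. -/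
theorem aux_comm {Ω : Set (ℝ × ℝ)} (hΩ : IsOpen Ω) {f : ℝ × ℝ → ℝ}
    (hf : ContDiffOn ℝ (⊤ : ℕ∞) f Ω) {p : ℝ × ℝ} (hp : p ∈ Ω) :
    pdt (pdx f) p = pdx (pdt f) p := by
  have h : ContDiffAt ℝ (⊤ : ℕ∞) f p := hf.contDiffAt (hΩ.mem_nhds hp)
  have hd : DifferentiableAt ℝ (fderiv ℝ f) p :=
    (h.fderiv_right (m := 1) (by norm_cast)).differentiableAt (by norm_num)
  have hs : IsSymmSndFDerivAt ℝ f p := h.isSymmSndFDerivAt (by simp; exact WithTop.coe_le_coe.2 (le_top : (2 : ℕ∞) ≤ ⊤))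
  have e : ∀ a b : ℝ × ℝ, fderiv ℝ (fun q => fderiv ℝ f q a) p b = fderiv ℝ (fderiv ℝ f) p b a := by
    intro a b
    rw [fderiv_clm_apply hd (differentiableAt_const a)]
    simp
  change fderiv ℝ (fun q => fderiv ℝ f q (1, 0)) p (0, 1)
    = fderiv ℝ (fun q => fderiv ℝ f q (0, 1)) p (1, 0)
  rw [e, e]
  exact hs _ _

theorem aux_smooth {Ω : Set (ℝ × ℝ)} (hΩ : IsOpen Ω) {f : ℝ × ℝ → ℝ}
    (hf : ContDiffOn ℝ (⊤ : ℕ∞) f Ω) :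
    ContDiffOn ℝ (⊤ : ℕ∞) (pdx f) Ω ∧ ContDiffOn ℝ (⊤ : ℕ∞) (pdt f) Ω := by
  have h : ContDiffOn ℝ (⊤ : ℕ∞) (fderiv ℝ f) Ω := hf.fderiv_of_isOpen hΩ (by norm_cast)
  exact ⟨h.clm_apply contDiffOn_const, h.clm_apply contDiffOn_const⟩

theorem aux_congr {Ω : Set (ℝ × ℝ)} (hΩ : IsOpen Ω) {f g : ℝ × ℝ → ℝ}
    (h : ∀ z ∈ Ω, f z = g z) {p : ℝ × ℝ} (hp : p ∈ Ω) :
    pdx f p = pdx g p ∧ pdt f p = pdt g p := by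
  have e : f =ᶠ[nhds p] g := Filter.eventually_of_mem (hΩ.mem_nhds hp) h
  simp only [pdx, pdt, e.fderiv_eq, and_self]

theorem aux_ttx {Ω : Set (ℝ × ℝ)} (hΩ : IsOpen Ω) {f g : ℝ × ℝ → ℝ}
    (hf : ContDiffOn ℝ (⊤ : ℕ∞) f Ω) (h : ∀ z ∈ Ω, pdt (pdt f) z = g z)
    {p : ℝ × ℝ} (hp : p ∈ Ω) :
    pdt (pdt (pdx f)) p = pdx g p := by
  rw [(aux_congr hΩ (fun z hz => aux_comm hΩ hf hz) hp).2,
    aux_comm hΩ (aux_smooth hΩ hf).2 hp, (aux_congr hΩ h hp).1]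

/-- if smooth `u, v, w` satisfy the Oriented Associativity system on an
open `Ω ⊆ ℝ²` and `w_xx` is nowhere zero on `Ω`, then
`q¹ = u_xx, q² = u_xt, q³ = v_xx, q⁴ = v_xt, q⁵ = w_xx, q⁶ = w_xt` satisfy the
hydrodynamic-type system of conservation laws (six). -/
theorem statement1 (Ω : Set (ℝ × ℝ)) (hΩ : IsOpen Ω)
    (u v w : ℝ × ℝ → ℝ)
    (hu : ContDiffOn ℝ (⊤ : ℕ∞) u Ω) (hv : ContDiffOn ℝ (⊤ : ℕ∞) v Ω) (hw : ContDiffOn ℝ (⊤ : ℕ∞) w Ω)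
    (hOA : ∀ p ∈ Ω,
      pdx (pdx u) p = pdt (pdx v) p * pdx (pdx w) p - pdx (pdx v) p * pdt (pdx w) p
        + (pdt (pdx w) p) ^ 2 - pdx (pdx w) p * pdt (pdt w) p ∧
      pdt (pdx u) p = pdt (pdt v) p * pdx (pdx w) p - pdt (pdx v) p * pdt (pdx w) p ∧
      pdt (pdt u) p = (pdt (pdx v) p) ^ 2 - pdx (pdx v) p * pdt (pdt v) p
        + pdt (pdt v) p * pdt (pdx w) p - pdt (pdx v) p * pdt (pdt w) p)
    (hwxx : ∀ p ∈ Ω, pdx (pdx w) p ≠ 0)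
    (q1 q2 q3 q4 q5 q6 : ℝ × ℝ → ℝ)
    (hq1 : q1 = pdx (pdx u)) (hq2 : q2 = pdt (pdx u))
    (hq3 : q3 = pdx (pdx v)) (hq4 : q4 = pdt (pdx v))
    (hq5 : q5 = pdx (pdx w)) (hq6 : q6 = pdt (pdx w)) :
    ∀ p ∈ Ω,
      pdt q1 p = pdx q2 p ∧
      pdt q2 p = pdx (fun z => (q2 z * q6 z + q1 z * q4 z - q2 z * q3 z) / q5 z) p ∧
      pdt q3 p = pdx q4 p ∧
      pdt q4 p = pdx (fun z => (q2 z + q4 z * q6 z) / q5 z) p ∧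
      pdt q5 p = pdx q6 p ∧
      pdt q6 p = pdx (fun z => ((q6 z) ^ 2 - q3 z * q6 z + q4 z * q5 z - q1 z) / q5 z) p := by
  subst hq1 hq2 hq3 hq4 hq5 hq6
  intro p hp
  refine ⟨aux_comm hΩ (aux_smooth hΩ hu).1 hp, aux_ttx hΩ hu ?_ hp,
    aux_comm hΩ (aux_smooth hΩ hv).1 hp, aux_ttx hΩ hv ?_ hp,
    aux_comm hΩ (aux_smooth hΩ hw).1 hp, aux_ttx hΩ hw ?_ hp⟩
  all_goals
    intro z hz
    obtain ⟨h1, h2, h3⟩ := hOA z hz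
    rw [eq_div_iff (hwxx z hz)]
  · rw [h3, h2, h1]; ring
  · rw [h2]; ring
  · rw [h1]; ring
end

section
/- Let Ω ⊆ ℝ² be open and let q = (q¹,…,q⁶) : Ω → ℝ⁶ be a smooth solution of the hydrodynamic system (six) with q⁵ nowhere zero. Let v : Ω → ℝ be a smooth function satisfying v³ − (q³ + q⁶)v² + (q³q⁶ − q⁴q⁵ − q¹)v + (q¹q⁶ − q²q⁵) = 0 at every point (i.e., v is a root of the characteristic polynomial of the Lax matrix), and assume v is a simple root, i.e., 3v² − 2(q³ + q⁶)v + (q³q⁶ − q⁴q⁵ − q¹) is nowhere zero on Ω. Then v is a conserved density: ∂_t v = ∂_x[(v² − q³·v − q¹)/q⁵] on Ω. -/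
theorem fderiv_div_aux (f g : ℝ × ℝ → ℝ) (p : ℝ × ℝ) (f' g' : ℝ × ℝ →L[ℝ] ℝ)
    (hf : HasFDerivAt f f' p) (hg : HasFDerivAt g g' p) (h : g p ≠ 0) (w : ℝ × ℝ) :
    fderiv ℝ (fun z => f z / g z) p w = (f' w * g p - f p * g' w) / (g p) ^ 2 := by
  have hi := (hasDerivAt_inv h).comp_hasFDerivAt p hg
  have := (hf.mul hi).fderiv
  have e : (fun z => f z / g z) = f * ((fun y => y⁻¹) ∘ g) := by
    funext z
    simp [div_eq_mul_inv]
  rw [e, this]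
  simp
  field_simp
  ring

/-- for a smooth solution `(q¹,…,q⁶)` of the hydrodynamic system (six)
with `q⁵` nowhere zero, any smooth simple root `v` of the characteristic polynomial of
the Lax matrix is a conserved density: `∂_t v = ∂_x[(v² − q³v − q¹)/q⁵]`. -/
theorem statement3 (Ω : Set (ℝ × ℝ)) (hΩ : IsOpen Ω)
    (q1 q2 q3 q4 q5 q6 : ℝ × ℝ → ℝ)
    (hq1 : ContDiffOn ℝ (⊤ : ℕ∞) q1 Ω) (hq2 : ContDiffOn ℝ (⊤ : ℕ∞) q2 Ω)
    (hq3 : ContDiffOn ℝ (⊤ : ℕ∞) q3 Ω) (hq4 : ContDiffOn ℝ (⊤ : ℕ∞) q4 Ω)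
    (hq5 : ContDiffOn ℝ (⊤ : ℕ∞) q5 Ω) (hq6 : ContDiffOn ℝ (⊤ : ℕ∞) q6 Ω)
    (hq5ne : ∀ p ∈ Ω, q5 p ≠ 0)
    (hsys : ∀ p ∈ Ω,
      pdt q1 p = pdx q2 p ∧
      pdt q2 p = pdx (fun z => (q2 z * q6 z + q1 z * q4 z - q2 z * q3 z) / q5 z) p ∧
      pdt q3 p = pdx q4 p ∧
      pdt q4 p = pdx (fun z => (q2 z + q4 z * q6 z) / q5 z) p ∧
      pdt q5 p = pdx q6 p ∧
      pdt q6 p = pdx (fun z => ((q6 z) ^ 2 - q3 z * q6 z + q4 z * q5 z - q1 z) / q5 z) p)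
    (v : ℝ × ℝ → ℝ) (hv : ContDiffOn ℝ (⊤ : ℕ∞) v Ω)
    (hroot : ∀ p ∈ Ω,
      (v p) ^ 3 - (q3 p + q6 p) * (v p) ^ 2
        + (q3 p * q6 p - q4 p * q5 p - q1 p) * v p + (q1 p * q6 p - q2 p * q5 p) = 0)
    (hsimple : ∀ p ∈ Ω,
      3 * (v p) ^ 2 - 2 * (q3 p + q6 p) * v p + (q3 p * q6 p - q4 p * q5 p - q1 p) ≠ 0) :
    ∀ p ∈ Ω, pdt v p = pdx (fun z => ((v z) ^ 2 - q3 z * v z - q1 z) / q5 z) p := by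
  intro p hp
  have hn := hΩ.mem_nhds hp
  have D : ∀ f : ℝ × ℝ → ℝ, ContDiffOn ℝ (⊤ : ℕ∞) f Ω → HasFDerivAt f (fderiv ℝ f p) p :=
    fun f hf => ((hf.contDiffAt hn).differentiableAt (by simp)).hasFDerivAt
  have d1 := D q1 hq1
  have d2 := D q2 hq2
  have d3 := D q3 hq3
  have d4 := D q4 hq4
  have d5 := D q5 hq5
  have d6 := D q6 hq6
  have dv := D v hv
  have h5 := hq5ne p hp
  have hF := hroot p hp
  have hs := hsimple p hp
  obtain ⟨e1, e2, e3, e4, e5, e6⟩ := hsys p hp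
  have dF := (((dv.pow 3).sub ((d3.add d6).mul (dv.pow 2))).add
    ((((d3.mul d6).sub (d4.mul d5)).sub d1).mul dv)).add ((d1.mul d6).sub (d2.mul d5))
  have dF0 := dF.congr_of_eventuallyEq (f₁ := fun _ => (0:ℝ))
    (by filter_upwards [hn] with z hz using (hroot z hz).symm)
  have hE := dF0.unique (hasFDerivAt_const (0:ℝ) p)
  have Hx := congrArg (fun L => L ((1:ℝ), (0:ℝ))) hE
  have Ht := congrArg (fun L => L ((0:ℝ), (1:ℝ))) hE
  clear dF dF0 hE
  unfold pdx pdt at *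
  rw [fderiv_div_aux (fun z => q2 z * q6 z + q1 z * q4 z - q2 z * q3 z) q5 p _ _ (((d2.mul d6).add (d1.mul d4)).sub (d2.mul d3)) d5 h5] at e2
  rw [fderiv_div_aux (fun z => q2 z + q4 z * q6 z) q5 p _ _ (d2.add (d4.mul d6)) d5 h5] at e4
  rw [fderiv_div_aux (fun z => (q6 z) ^ 2 - q3 z * q6 z + q4 z * q5 z - q1 z) q5 p _ _ ((((d6.pow 2).sub (d3.mul d6)).add (d4.mul d5)).sub d1) d5 h5] at e6
  rw [fderiv_div_aux (fun z => (v z) ^ 2 - q3 z * v z - q1 z) q5 p _ _ (((dv.pow 2).sub (d3.mul dv)).sub d1) d5 h5]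
  rw [eq_div_iff (pow_ne_zero 2 h5)] at e2 e4 e6 ⊢
  simp at e2 e4 e6 Hx Ht ⊢
  apply mul_left_cancel₀ hs
  generalize fderiv ℝ q1 p (1, 0) = x1 at *
  generalize fderiv ℝ q2 p (1, 0) = x2 at *
  generalize fderiv ℝ q3 p (1, 0) = x3 at *
  generalize fderiv ℝ q4 p (1, 0) = x4 at *
  generalize fderiv ℝ q5 p (1, 0) = x5 at *
  generalize fderiv ℝ q6 p (1, 0) = x6 at *
  generalize fderiv ℝ v p (1, 0) = xv at *
  generalize fderiv ℝ q1 p (0, 1) = t1 at *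
  generalize fderiv ℝ q2 p (0, 1) = t2 at *
  generalize fderiv ℝ q3 p (0, 1) = t3 at *
  generalize fderiv ℝ q4 p (0, 1) = t4 at *
  generalize fderiv ℝ q5 p (0, 1) = t5 at *
  generalize fderiv ℝ q6 p (0, 1) = t6 at *
  generalize fderiv ℝ v p (0, 1) = tv at *
  subst e1 e3 e5
  linear_combination (q5 p)^2 * Ht - q5 p * (2 * v p - q3 p) * Hx
    - (2 * q5 p * t5 - q5 p * x3 + (2 * q3 p - q6 p - 3 * v p) * x5) * hF
    + q5 p * e2 + q5 p * v p * e4 + ((v p)^2 - q3 p * v p - q1 p) * e6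
end

section
/- Let Ω ⊆ ℝ² be open and u = (u¹,…,u⁶) : Ω → ℝ⁶ smooth with u⁵ nowhere zero and u¹, u², u³ pairwise distinct at every point. Define q = φ(u) : Ω → ℝ⁶ by the coordinate change φ, and let H(u) := q²-component of φ(u) and let g be the constant symmetric 6×6 matrix g = −[[0,1,1,0,0,0],[1,0,1,0,0,0],[1,1,0,0,0,0],[0,0,0,0,1,0],[0,0,0,1,0,0],[0,0,0,0,0,2]]. Then q satisfies the hydrodynamic system (six) on Ω if and only if u satisfies the Hamiltonian system u^i_t = Σ_k g^{ik} ∂_x[(∂H/∂u^k)(u)] for i = 1,…,6. -/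
/-- Partial derivative in direction `k` for functions on `ℝ⁶`. -/
noncomputable def pd (k : Fin 6) (f : (Fin 6 → ℝ) → ℝ) (x : Fin 6 → ℝ) : ℝ :=
  fderiv ℝ f x (Pi.single k 1)

/-- The coordinate change `φ : (u¹,…,u⁶) ↦ (q¹,…,q⁶)` (0-based indices: `u i = uⁱ⁺¹`). -/
noncomputable def phi (x : Fin 6 → ℝ) : Fin 6 → ℝ :=
  let q1 : ℝ := (1 / 4) * (x 0 + x 1 + x 2) ^ 2 - (x 0 * x 1 + x 0 * x 2 + x 1 * x 2)
    - (1 / 4) * (x 5) ^ 2 - x 3 * x 4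
  ![q1,
    (2 * x 0 * x 1 * x 2 + (x 0 + x 1 + x 2 - x 5) * q1) / (2 * x 4),
    (1 / 2) * (x 0 + x 1 + x 2 + x 5),
    x 3,
    x 4,
    (1 / 2) * (x 0 + x 1 + x 2 - x 5)]

/-- The constant flat (contravariant) metric `g^{ik}` of the first-order Hamiltonian
operator. -/
def gmat : Matrix (Fin 6) (Fin 6) ℝ :=
  -(!![0, 1, 1, 0, 0, 0;
       1, 0, 1, 0, 0, 0;
       1, 1, 0, 0, 0, 0;
       0, 0, 0, 0, 1, 0;
       0, 0, 0, 1, 0, 0;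
       0, 0, 0, 0, 0, 2])

structure HD {E : Type*} [NormedAddCommGroup E] [NormedSpace ℝ E] (f : E → ℝ) (p v : E) (d : ℝ) :
    Prop where
  diff : DifferentiableAt ℝ f p
  eq : fderiv ℝ f p v = d

section HDlemmas
variable {E : Type*} [NormedAddCommGroup E] [NormedSpace ℝ E] {f g : E → ℝ} {p v : E} {d d' : ℝ}

lemma HD.cst (c : ℝ) : HD (fun _ => c) p v 0 := ⟨by fun_prop, by simp⟩

lemma HD.add (hf : HD f p v d) (hg : HD g p v d') : HD (fun z => f z + g z) p v (d + d') :=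
  ⟨hf.diff.add hg.diff, by rw [fderiv_fun_add hf.diff hg.diff]; simp [hf.eq, hg.eq]⟩

lemma HD.sub (hf : HD f p v d) (hg : HD g p v d') : HD (fun z => f z - g z) p v (d - d') :=
  ⟨hf.diff.sub hg.diff, by rw [fderiv_fun_sub hf.diff hg.diff]; simp [hf.eq, hg.eq]⟩

lemma HD.neg (hf : HD f p v d) : HD (fun z => - f z) p v (-d) :=
  ⟨hf.diff.neg, by rw [fderiv_fun_neg]; simp [hf.eq]⟩

lemma HD.mul (hf : HD f p v d) (hg : HD g p v d') :
    HD (fun z => f z * g z) p v (f p * d' + g p * d) :=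
  ⟨hf.diff.mul hg.diff, by rw [fderiv_fun_mul hf.diff hg.diff]; simp [hf.eq, hg.eq]⟩

lemma HD.sq (hf : HD f p v d) : HD (fun z => f z ^ 2) p v (f p * d + f p * d) := by
  have := hf.mul hf
  simpa only [pow_two] using this

lemma HD.div (hf : HD f p v d) (hg : HD g p v d') (h0 : g p ≠ 0) :
    HD (fun z => f z / g z) p v ((d * g p - f p * d') / g p ^ 2) := by
  have hi : HasFDerivAt (fun z => (g z)⁻¹) (-(g p ^ 2)⁻¹ • fderiv ℝ g p) p :=
    (hasDerivAt_inv h0).comp_hasFDerivAt p hg.diff.hasFDerivAt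
  have h2 : HD (fun z => (g z)⁻¹) p v (-(g p ^ 2)⁻¹ * d') :=
    ⟨hi.differentiableAt, by rw [hi.fderiv]; simp [hg.eq]⟩
  have h3 := hf.mul h2
  simp only [← div_eq_mul_inv] at h3
  refine ⟨h3.diff, h3.eq.trans ?_⟩
  field_simp
  ring

lemma HD.cd (hf : HD f p v d) (h : d = d') : HD f p v d' := h ▸ hf

variable {a b c k e m : E → ℝ} {a' b' c' k' e' m' : ℝ}

lemma HD_Q1 (ha : HD a p v a') (hb : HD b p v b') (hc : HD c p v c') (hk : HD k p v k')
    (he : HD e p v e') (hm : HD m p v m') :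
    HD (fun z => (1 / 4) * (a z + b z + c z) ^ 2 - (a z * b z + a z * c z + b z * c z)
      - (1 / 4) * (m z) ^ 2 - k z * e z) p v
      ((a p - b p - c p) / 2 * a' + (b p - a p - c p) / 2 * b' + (c p - a p - b p) / 2 * c'
        - e p * k' - k p * e' - m p / 2 * m') := by
  refine HD.cd (((((HD.cst _).mul ((ha.add hb).add hc).sq).sub
    (((ha.mul hb).add (ha.mul hc)).add (hb.mul hc))).sub ((HD.cst _).mul hm.sq)).sub
    (hk.mul he)) ?_
  ring

lemma HD_Q2 {Q : E → ℝ} {Q' : ℝ} (hQ : HD Q p v Q')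
    (ha : HD a p v a') (hb : HD b p v b') (hc : HD c p v c')
    (he : HD e p v e') (hm : HD m p v m') (h0 : e p ≠ 0) :
    HD (fun z => (2 * a z * b z * c z + (a z + b z + c z - m z) * Q z) / (2 * e z)) p v
      ((2 * (b p * c p * a' + a p * c p * b' + a p * b p * c') + (a' + b' + c' - m') * Q p
        + (a p + b p + c p - m p) * Q') / (2 * e p)
        - (2 * a p * b p * c p + (a p + b p + c p - m p) * Q p) / (2 * e p ^ 2) * e') := by
  refine HD.cd (((((((HD.cst _).mul ha).mul hb).mul hc).add
    ((((ha.add hb).add hc).sub hm).mul hQ)).div ((HD.cst _).mul he) (by simpa using h0))) ?_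
  field_simp
  ring

end HDlemmas

/-- first component -/
noncomputable def Qa (x : Fin 6 → ℝ) : ℝ :=
  (1 / 4) * (x 0 + x 1 + x 2) ^ 2 - (x 0 * x 1 + x 0 * x 2 + x 1 * x 2)
    - (1 / 4) * (x 5) ^ 2 - x 3 * x 4

/-- second component -/
noncomputable def Qb (x : Fin 6 → ℝ) : ℝ :=
  (2 * x 0 * x 1 * x 2 + (x 0 + x 1 + x 2 - x 5) * Qa x) / (2 * x 4)

/-- derivative of Qa -/
noncomputable def dQa (x w : Fin 6 → ℝ) : ℝ :=
  (x 0 - x 1 - x 2) / 2 * w 0 + (x 1 - x 0 - x 2) / 2 * w 1 + (x 2 - x 0 - x 1) / 2 * w 2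
    - x 4 * w 3 - x 3 * w 4 - x 5 / 2 * w 5

/-- derivative of Qb -/
noncomputable def dQb (x w : Fin 6 → ℝ) : ℝ :=
  (2 * (x 1 * x 2 * w 0 + x 0 * x 2 * w 1 + x 0 * x 1 * w 2) + (w 0 + w 1 + w 2 - w 5) * Qa x
        + (x 0 + x 1 + x 2 - x 5) * dQa x w) / (2 * x 4)
        - (2 * x 0 * x 1 * x 2 + (x 0 + x 1 + x 2 - x 5) * Qa x) / (2 * x 4 ^ 2) * w 4

section
variable {E : Type*} [NormedAddCommGroup E] [NormedSpace ℝ E] {U : E → Fin 6 → ℝ} {p v : E}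
  {w : Fin 6 → ℝ}

lemma HD_Qa (h : ∀ i, HD (fun z => U z i) p v (w i)) :
    HD (fun z => Qa (U z)) p v (dQa (U p) w) :=
  HD_Q1 (h 0) (h 1) (h 2) (h 3) (h 4) (h 5)

lemma HD_Qb (h : ∀ i, HD (fun z => U z i) p v (w i)) (h0 : U p 4 ≠ 0) :
    HD (fun z => Qb (U z)) p v (dQb (U p) w) :=
  HD_Q2 (HD_Qa h) (h 0) (h 1) (h 2) (h 4) (h 5) h0

end

/-- gradient of Qb -/
noncomputable def G (x : Fin 6 → ℝ) : Fin 6 → ℝ :=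
  ![(2 * x 1 * x 2 + Qa x + (x 0 + x 1 + x 2 - x 5) * ((x 0 - x 1 - x 2) / 2)) / (2 * x 4),
    (2 * x 0 * x 2 + Qa x + (x 0 + x 1 + x 2 - x 5) * ((x 1 - x 0 - x 2) / 2)) / (2 * x 4),
    (2 * x 0 * x 1 + Qa x + (x 0 + x 1 + x 2 - x 5) * ((x 2 - x 0 - x 1) / 2)) / (2 * x 4),
    -(x 0 + x 1 + x 2 - x 5) / 2,
    -(Qb x + (x 0 + x 1 + x 2 - x 5) / 2 * x 3) / x 4,
    -(Qa x + (x 0 + x 1 + x 2 - x 5) / 2 * x 5) / (2 * x 4)]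

lemma pd_Qb (x : Fin 6 → ℝ) (h0 : x 4 ≠ 0) (k : Fin 6) : pd k Qb x = G x k := by
  have h : ∀ i, HD (fun z : Fin 6 → ℝ => z i) x (Pi.single k 1) ((Pi.single k 1 : Fin 6 → ℝ) i) :=
    fun i => ⟨by fun_prop, by
      have : HasFDerivAt (fun z : Fin 6 → ℝ => z i) (ContinuousLinearMap.proj i) x :=
        (ContinuousLinearMap.proj (R := ℝ) (φ := fun _ : Fin 6 => ℝ) i).hasFDerivAt
      rw [this.fderiv]; rfl⟩
  have h1 := (HD_Qb (U := fun z => z) h h0).eq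
  rw [pd, show (Qb = fun z => Qb z) from rfl, h1]
  fin_cases k <;> simp [dQb, dQa, G, Pi.single_apply, Qb] <;> field_simp <;> ring

/-- derivative of G -/
noncomputable def dG (x w : Fin 6 → ℝ) : Fin 6 → ℝ :=
  let T := (x 0 + x 1 + x 2 - x 5)
  let T' := (w 0 + w 1 + w 2 - w 5)
  let N0 := 2 * x 1 * x 2 + Qa x + T * ((x 0 - x 1 - x 2) / 2)
  let N1 := 2 * x 0 * x 2 + Qa x + T * ((x 1 - x 0 - x 2) / 2)
  let N2 := 2 * x 0 * x 1 + Qa x + T * ((x 2 - x 0 - x 1) / 2)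
  ![(2 * (w 1 * x 2 + x 1 * w 2) + dQa x w + T' * ((x 0 - x 1 - x 2) / 2)
      + T * ((w 0 - w 1 - w 2) / 2)) / (2 * x 4) - N0 / (2 * x 4 ^ 2) * w 4,
    (2 * (w 0 * x 2 + x 0 * w 2) + dQa x w + T' * ((x 1 - x 0 - x 2) / 2)
      + T * ((w 1 - w 0 - w 2) / 2)) / (2 * x 4) - N1 / (2 * x 4 ^ 2) * w 4,
    (2 * (w 0 * x 1 + x 0 * w 1) + dQa x w + T' * ((x 2 - x 0 - x 1) / 2)
      + T * ((w 2 - w 0 - w 1) / 2)) / (2 * x 4) - N2 / (2 * x 4 ^ 2) * w 4,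
    -T' / 2,
    -(dQb x w + T' / 2 * x 3 + T / 2 * w 3) / x 4 + (Qb x + T / 2 * x 3) / x 4 ^ 2 * w 4,
    -(dQa x w + T' / 2 * x 5 + T / 2 * w 5) / (2 * x 4)
      + (Qa x + T / 2 * x 5) / (2 * x 4 ^ 2) * w 4]

section
variable {E : Type*} [NormedAddCommGroup E] [NormedSpace ℝ E] {U : E → Fin 6 → ℝ} {p v : E}
  {w : Fin 6 → ℝ}

lemma HD_G (h : ∀ i, HD (fun z => U z i) p v (w i)) (h0 : U p 4 ≠ 0) (k : Fin 6) :
    HD (fun z => G (U z) k) p v (dG (U p) w k) := by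
  have hT := (((h 0).add (h 1)).add (h 2)).sub (h 5)
  have hA := HD_Qa h
  have hB := HD_Qb h h0
  have h2 := (HD.cst (p := p) (v := v) 2)
  have h20 : 2 * U p 4 ≠ 0 := by simpa using h0
  have h22 : (2 : ℝ) ≠ 0 := two_ne_zero
  have hE := h2.mul (h 4)
  fin_cases k
  · refine HD.cd ((((((h2.mul (h 1)).mul (h 2)).add hA).add
      (hT.mul ((((h 0).sub (h 1)).sub (h 2)).div h2 h22)))).div hE h20) ?_
    simp only [dG, Fin.zero_eta, Matrix.cons_val_zero]
    field_simp
    ring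
  · refine HD.cd ((((((h2.mul (h 0)).mul (h 2)).add hA).add
      (hT.mul ((((h 1).sub (h 0)).sub (h 2)).div h2 h22)))).div hE h20) ?_
    simp [dG]
    field_simp
    ring
  · refine HD.cd ((((((h2.mul (h 0)).mul (h 1)).add hA).add
      (hT.mul ((((h 2).sub (h 0)).sub (h 1)).div h2 h22)))).div hE h20) ?_
    simp [dG]
    field_simp
    ring
  · refine HD.cd (hT.neg.div h2 h22) ?_
    simp [dG]
    field_simp
  · refine HD.cd ((hB.add ((hT.div h2 h22).mul (h 3))).neg.div (h 4) h0) ?_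
    simp [dG]
    field_simp
    ring
  · refine HD.cd ((hA.add ((hT.div h2 h22).mul (h 5))).neg.div hE h20) ?_
    simp [dG]
    field_simp
    ring

end

/-- right-hand side -/
noncomputable def R (x w : Fin 6 → ℝ) (i : Fin 6) : ℝ := ∑ k, gmat i k * dG x w k

lemma R0 (x w) : R x w 0 = -(dG x w 1 + dG x w 2) := by
  simp [R, gmat, Fin.sum_univ_succ]
lemma R1 (x w) : R x w 1 = -(dG x w 0 + dG x w 2) := by
  simp [R, gmat, Fin.sum_univ_succ]
lemma R2 (x w) : R x w 2 = -(dG x w 0 + dG x w 1) := by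
  simp [R, gmat, Fin.sum_univ_succ]
lemma R3 (x w) : R x w 3 = -(dG x w 4) := by
  simp [R, gmat, Fin.sum_univ_succ]
lemma R4 (x w) : R x w 4 = -(dG x w 3) := by
  simp [R, gmat, Fin.sum_univ_succ]
lemma R5 (x w) : R x w 5 = -(2 * dG x w 5) := by
  simp [R, gmat, Fin.sum_univ_succ]

lemma inj (x b r : Fin 6 → ℝ) (h0 : x 4 ≠ 0) (h01 : x 0 ≠ x 1) (h02 : x 0 ≠ x 2) (h12 : x 1 ≠ x 2)
    (e0 : dQa x b = dQa x r) (e1 : dQb x b = dQb x r)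
    (e2 : (b 0 + b 1 + b 2 + b 5) / 2 = (r 0 + r 1 + r 2 + r 5) / 2)
    (e3 : b 3 = r 3) (e4 : b 4 = r 4)
    (e5 : (b 0 + b 1 + b 2 - b 5) / 2 = (r 0 + r 1 + r 2 - r 5) / 2) : b = r := by
  have f5 : b 5 = r 5 := by linarith
  have fs : (b 0 - r 0) + (b 1 - r 1) + (b 2 - r 2) = 0 := by linarith
  have fb : x 0 * (b 0 - r 0) + x 1 * (b 1 - r 1) + x 2 * (b 2 - r 2) = 0 := by
    simp only [dQa, e3, e4, f5] at e0
    linear_combination e0 + (x 0 + x 1 + x 2) / 2 * fs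
  have fc : x 1 * x 2 * (b 0 - r 0) + x 0 * x 2 * (b 1 - r 1) + x 0 * x 1 * (b 2 - r 2) = 0 := by
    simp only [dQb, e0, e4, f5] at e1
    have e1' := sub_eq_zero.mpr e1
    field_simp at e1'
    apply mul_left_cancel₀ h0
    linear_combination e1' / 2 - x 4 * Qa x / 2 * fs
  have g0 : b 0 = r 0 := by
    have : (x 0 - x 1) * (x 0 - x 2) * (b 0 - r 0) = 0 := by
      linear_combination x 0 * fb - x 0 * (x 1 + x 2) * fs + fc
    have := (mul_eq_zero.mp this).resolve_left
      (mul_ne_zero (sub_ne_zero.mpr h01) (sub_ne_zero.mpr h02))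
    linarith
  have g1 : b 1 = r 1 := by
    have : (x 1 - x 2) * (b 1 - r 1) = 0 := by
      rw [g0] at fs fb
      linear_combination fb - x 2 * fs
    have := (mul_eq_zero.mp this).resolve_left (sub_ne_zero.mpr h12)
    linarith
  have g2 : b 2 = r 2 := by linarith
  funext i
  fin_cases i <;> assumption

lemma key0 (x w : Fin 6 → ℝ) (h0 : x 4 ≠ 0) : dQa x (R x w) = dQb x w := by
  simp only [dQa, R0, R1, R2, R3, R4, R5]
  simp [dG, dQb, dQa, Qb, Qa]
  field_simp
  ring

/-- flux derivative -/
noncomputable def dF1 (x w : Fin 6 → ℝ) : ℝ :=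
  (dQb x w * (-x 5) - Qb x * w 5 + dQa x w * x 3 + Qa x * w 3) / x 4
    - (Qb x * (-x 5) + Qa x * x 3) / x 4 ^ 2 * w 4

lemma key1 (x w : Fin 6 → ℝ) (h0 : x 4 ≠ 0) : dQb x (R x w) = dF1 x w := by
  unfold dQb
  rw [key0 x w h0]
  simp only [R0, R1, R2, R3, R4, R5]
  simp [dF1, dG, dQb, dQa, Qb, Qa]
  field_simp
  ring

lemma key2 (x w : Fin 6 → ℝ) (h0 : x 4 ≠ 0) :
    (R x w 0 + R x w 1 + R x w 2 + R x w 5) / 2 = w 3 := by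
  simp only [R0, R1, R2, R3, R4, R5]
  simp [dG, dQa, Qa]
  field_simp
  ring

lemma key3 (x w : Fin 6 → ℝ) (h0 : x 4 ≠ 0) : R x w 3 =
    (dQb x w + w 3 * ((x 0 + x 1 + x 2 - x 5) / 2) + x 3 * ((w 0 + w 1 + w 2 - w 5) / 2)) / x 4
     - (Qb x + x 3 * ((x 0 + x 1 + x 2 - x 5) / 2)) / x 4 ^ 2 * w 4 := by
  simp only [R3]
  simp [dG]
  field_simp
  ring

lemma key4 (x w : Fin 6 → ℝ) : R x w 4 = (w 0 + w 1 + w 2 - w 5) / 2 := by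
  simp only [R4]
  simp [dG]
  ring

/-- flux derivative -/
noncomputable def dF5 (x w : Fin 6 → ℝ) : ℝ :=
  (-w 5 * ((x 0 + x 1 + x 2 - x 5) / 2) - x 5 * ((w 0 + w 1 + w 2 - w 5) / 2)
    + w 3 * x 4 + x 3 * w 4 - dQa x w) / x 4
    - (-x 5 * ((x 0 + x 1 + x 2 - x 5) / 2) + x 3 * x 4 - Qa x) / x 4 ^ 2 * w 4

lemma key5 (x w : Fin 6 → ℝ) (h0 : x 4 ≠ 0) :
    (R x w 0 + R x w 1 + R x w 2 - R x w 5) / 2 = dF5 x w := by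
  simp only [R0, R1, R2, R3, R4, R5]
  simp [dF5, dG, dQa, Qa]
  field_simp
  ring

/-- for smooth `u : Ω → ℝ⁶` with `u⁵` nowhere zero and `u¹,u²,u³` pairwise
distinct, `q = φ(u)` satisfies the hydrodynamic system (six) if and only if `u` satisfies
the Hamiltonian system `uⁱ_t = Σ_k g^{ik} ∂_x[(∂H/∂u^k)(u)]` with Hamiltonian density
`H(u) = q²`-component of `φ(u)`. -/
theorem statement5 (Ω : Set (ℝ × ℝ)) (hΩ : IsOpen Ω)
    (u : ℝ × ℝ → (Fin 6 → ℝ)) (hu : ContDiffOn ℝ (⊤ : ℕ∞) u Ω)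
    (hu5 : ∀ p ∈ Ω, u p 4 ≠ 0)
    (hdist : ∀ p ∈ Ω, u p 0 ≠ u p 1 ∧ u p 0 ≠ u p 2 ∧ u p 1 ≠ u p 2)
    (q : ℝ × ℝ → (Fin 6 → ℝ)) (hq : ∀ p, q p = phi (u p))
    (H : (Fin 6 → ℝ) → ℝ) (hH : ∀ x, H x = phi x 1) :
    (∀ p ∈ Ω,
      pdt (fun z => q z 0) p = pdx (fun z => q z 1) p ∧
      pdt (fun z => q z 1) p
        = pdx (fun z => (q z 1 * q z 5 + q z 0 * q z 3 - q z 1 * q z 2) / q z 4) p ∧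
      pdt (fun z => q z 2) p = pdx (fun z => q z 3) p ∧
      pdt (fun z => q z 3) p = pdx (fun z => (q z 1 + q z 3 * q z 5) / q z 4) p ∧
      pdt (fun z => q z 4) p = pdx (fun z => q z 5) p ∧
      pdt (fun z => q z 5) p
        = pdx (fun z => ((q z 5) ^ 2 - q z 2 * q z 5 + q z 3 * q z 4 - q z 0) / q z 4) p) ↔
    (∀ i : Fin 6, ∀ p ∈ Ω,
      pdt (fun z => u z i) p = ∑ k, gmat i k * pdx (fun z => pd k H (u z)) p) := by
  have hq0 : ∀ z, q z 0 = Qa (u z) := fun z => by rw [hq]; rfl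
  have hq1 : ∀ z, q z 1 = Qb (u z) := fun z => by rw [hq]; rfl
  have hq2 : ∀ z, q z 2 = (1 / 2) * (u z 0 + u z 1 + u z 2 + u z 5) := fun z => by rw [hq]; rfl
  have hq3 : ∀ z, q z 3 = u z 3 := fun z => by rw [hq]; rfl
  have hq4 : ∀ z, q z 4 = u z 4 := fun z => by rw [hq]; rfl
  have hq5 : ∀ z, q z 5 = (1 / 2) * (u z 0 + u z 1 + u z 2 - u z 5) := fun z => by rw [hq]; rfl
  have hHQ : H = Qb := by funext x; rw [hH]; rfl
  subst hHQ
  simp only [hq0, hq1, hq2, hq3, hq4, hq5]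
  rw [forall_comm]
  refine forall_congr' fun p => ?_
  rw [forall_comm]
  refine forall_congr' fun hp => ?_
  have h0 := hu5 p hp
  obtain ⟨h01, h02, h12⟩ := hdist p hp
  have hd : DifferentiableAt ℝ u p :=
    (hu.contDiffAt (hΩ.mem_nhds hp)).differentiableAt (by simp)
  have hdi : ∀ i, DifferentiableAt ℝ (fun z => u z i) p := fun i => differentiableAt_pi.mp hd i
  set w : Fin 6 → ℝ := fun i => pdx (fun z => u z i) p with hw
  set b : Fin 6 → ℝ := fun i => pdt (fun z => u z i) p with hb
  have hx : ∀ i, HD (fun z => u z i) p (1, 0) (w i) := fun i => ⟨hdi i, rfl⟩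
  have ht : ∀ i, HD (fun z => u z i) p (0, 1) (b i) := fun i => ⟨hdi i, rfl⟩
  have hpd : ∀ k, pdx (fun z => pd k Qb (u z)) p = dG (u p) w k := by
    intro k
    rw [pdx, ← (HD_G hx h0 k).eq]
    congr 1
    apply Filter.EventuallyEq.fderiv_eq
    filter_upwards [hΩ.mem_nhds hp] with z hz
    exact pd_Qb _ (hu5 z hz) k
  simp only [hpd]
  change _ ↔ ∀ i, b i = R (u p) w i
  rw [← funext_iff]
  have hS5 := fun {v : ℝ × ℝ} {d : Fin 6 → ℝ} (h : ∀ i, HD (fun z => u z i) p v (d i)) =>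
    (HD.cst (1 / 2)).mul ((((h 0).add (h 1)).add (h 2)).sub (h 5))
  have hS2 := fun {v : ℝ × ℝ} {d : Fin 6 → ℝ} (h : ∀ i, HD (fun z => u z i) p v (d i)) =>
    (HD.cst (1 / 2)).mul ((((h 0).add (h 1)).add (h 2)).add (h 5))
  have t0 := (HD_Qa ht).eq
  have t1 := (HD_Qb ht h0).eq
  have t2 := (hS2 ht).eq
  have t5 := (hS5 ht).eq
  have x1 := (HD_Qb hx h0).eq
  have x5 := (hS5 hx).eq
  have F1 := (((((HD_Qb hx h0).mul (hS5 hx)).add ((HD_Qa hx).mul (hx 3))).sub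
    ((HD_Qb hx h0).mul (hS2 hx))).div (hx 4) h0).eq
  have F3 := (((HD_Qb hx h0).add ((hx 3).mul (hS5 hx))).div (hx 4) h0).eq
  have F5 := ((((((hS5 hx).sq).sub ((hS2 hx).mul (hS5 hx))).add ((hx 3).mul (hx 4))).sub
    (HD_Qa hx)).div (hx 4) h0).eq
  have c1 : pdx (fun z => (Qb (u z) * ((1 / 2) * (u z 0 + u z 1 + u z 2 - u z 5))
      + Qa (u z) * u z 3 - Qb (u z) * ((1 / 2) * (u z 0 + u z 1 + u z 2 + u z 5))) / u z 4) p
      = dQb (u p) (R (u p) w) := by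
    rw [key1 _ _ h0, dF1]
    refine F1.trans ?_
    field_simp
    ring
  have c3 : pdx (fun z => (Qb (u z) + u z 3 * ((1 / 2) * (u z 0 + u z 1 + u z 2 - u z 5)))
      / u z 4) p = R (u p) w 3 := by
    rw [key3 _ _ h0]
    refine F3.trans ?_
    field_simp
    ring
  have c5 : pdx (fun z => (((1 / 2) * (u z 0 + u z 1 + u z 2 - u z 5)) ^ 2
      - (1 / 2) * (u z 0 + u z 1 + u z 2 + u z 5) * ((1 / 2) * (u z 0 + u z 1 + u z 2 - u z 5))
      + u z 3 * u z 4 - Qa (u z)) / u z 4) p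
      = (R (u p) w 0 + R (u p) w 1 + R (u p) w 2 - R (u p) w 5) / 2 := by
    rw [key5 _ _ h0, dF5]
    refine F5.trans ?_
    field_simp
    ring
  have c0 : pdx (fun z => Qb (u z)) p = dQa (u p) (R (u p) w) := by
    rw [key0 _ _ h0]; exact x1
  have c2 : pdx (fun z => u z 3) p
      = (R (u p) w 0 + R (u p) w 1 + R (u p) w 2 + R (u p) w 5) / 2 := by
    rw [key2 _ _ h0]
  have c4 : pdx (fun z => (1 / 2) * (u z 0 + u z 1 + u z 2 - u z 5)) p = R (u p) w 4 := by
    rw [key4]; refine x5.trans ?_; ring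
  have l0 : pdt (fun z => Qa (u z)) p = dQa (u p) b := t0
  have l1 : pdt (fun z => Qb (u z)) p = dQb (u p) b := t1
  have l2 : pdt (fun z => (1 / 2) * (u z 0 + u z 1 + u z 2 + u z 5)) p
      = (b 0 + b 1 + b 2 + b 5) / 2 := by
    refine t2.trans ?_; ring
  have l5 : pdt (fun z => (1 / 2) * (u z 0 + u z 1 + u z 2 - u z 5)) p
      = (b 0 + b 1 + b 2 - b 5) / 2 := by
    refine t5.trans ?_; ring
  have l3 : pdt (fun z => u z 3) p = b 3 := rfl
  have l4 : pdt (fun z => u z 4) p = b 4 := rfl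
  rw [l0, l1, l2, l3, l4, l5, c0, c1, c2, c3, c4, c5]
  constructor
  · rintro ⟨e0, e1, e2, e3, e4, e5⟩
    exact inj (u p) b _ h0 h01 h02 h12 e0 e1 e2 e3 e4 e5
  · intro h
    rw [h]
    exact ⟨rfl, rfl, rfl, rfl, rfl, rfl⟩
end
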